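/- Let 𝒩 be a nonprincipal ultrafilter on ℕ and let O* be the ultrapower of the ring ℤ[1/2] over 𝒩 (the commutative ring of germs at 𝒩 of sequences in ℤ[1/2]). For all nonzero a,b ∈ O*, let I be the ideal of O* generated by a and b. Then the commutator subgroup of the principal congruence subgroup SL₃(O*)[I] contains SL₃(O*)[I²]. -/

import Mathlib

/-- The ring `ℤ[1/2]`, realized as the smallest subring of `ℚ` containing `1/2`. -/
def Zhalf : Subring ℚ := Subring.closure {(2 : ℚ)⁻¹}

/-- For a commutative ring `R` and an ideal `I`, the principal congruence subgroup
`SL₃(R)[I]`, i.e. the kernel of the reduction map `SL₃(R) → SL₃(R/I)`. -/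
def SL3Congruence (R : Type*) [CommRing R] (I : Ideal R) :
    Subgroup (Matrix.SpecialLinearGroup (Fin 3) R) :=
  (Matrix.SpecialLinearGroup.map (Ideal.Quotient.mk I)).ker

/-
Let `E = ⁅SL₃(R)[q], SL₃(R)[q]⁆`. It is normal and contains the elementary matrices of level
`Q = q²`. Over a ring satisfying Bass' stable range condition, the inclusion of `SL₃(R)[Q]` in `E`
only has to be tested on the matrices of `SL₂(R)[Q]`, embedded as a block. Modulo `E` such a matrix
depends on its first row `(a, b)` alone, and its class is the Mennicke symbol `{a, b}`, which is
multiplicative in `b` and invariant under `a ↦ a + t b` and, when `Q` divides `t`, under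
`b ↦ b + t a`.

Over `ℤ[1/2]`, one makes `a` a prime `p ≡ 3 mod 4`. The units of `ℤ/p` are then fourth powers up to
sign, so every symbol is a fourth power `{p, Q y}⁴`. To see that this is trivial, let `p₁` and `p₂`
be primes congruent to `± y` modulo `p`, with the same sign, such that `p₁ - 1` divides `p₂ + 1`,
and take matrices with first rows `(p, Q p₁)` and `(p, Q p₂)` and the same first column. By Fermat,
the `(p₂ + 1)`-st power of the former and the `(p₂ - 1)`-st power of the latter have top left
entries congruent to `1` modulo `Q p₁` and `Q p₂`. By the Cayley-Hamilton theorem, a power of `X` is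
a combination `f + g X`, and this makes the square of its class depend only on its top left entry
modulo an off-diagonal entry of `X`. Hence the squares of the classes of the two powers are trivial,
and comparing them through the common first column leaves `{p, Q p₁}⁴ = 1`.

None of this depends on the sizes of the exponents, so the argument runs in all coordinates of a
power `ℤ[1/2]^ι` at once. It descends to every reduced power, because the matrices of a congruence
subgroup lift.
-/

namespace Mennicke

open Matrix Matrix.SpecialLinearGroup
open scoped commutatorElement

/-- The principal congruence subgroup `SLₙ(R)[I]` for an arbitrary finite index type `n`. -/
def congruenceSubgroup (n : Type*) [Fintype n] [DecidableEq n] {R : Type*} [CommRing R]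
    (I : Ideal R) : Subgroup (SpecialLinearGroup n R) :=
  (SpecialLinearGroup.map (Ideal.Quotient.mk I)).ker

local notation "Γ(" n "," q ")" => congruenceSubgroup n (Ideal.span {q})

section CongruenceSubgroup

variable {n : Type*} [Fintype n] [DecidableEq n] {R S : Type*} [CommRing R] [CommRing S]

instance congruenceSubgroup_normal (I : Ideal R) : (congruenceSubgroup n I).Normal :=
  MonoidHom.normal_ker _

lemma mem_congruenceSubgroup_iff {I : Ideal R} {g : SpecialLinearGroup n R} :
    g ∈ congruenceSubgroup n I ↔ ∀ i j, g i j - (1 : Matrix n n R) i j ∈ I := by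
  rw [congruenceSubgroup, MonoidHom.mem_ker, Matrix.SpecialLinearGroup.ext_iff]
  refine forall₂_congr fun i j ↦ ?_
  simp [← Ideal.Quotient.mk_eq_mk_iff_sub_mem, one_apply, apply_ite (Ideal.Quotient.mk I)]

lemma congruenceSubgroup_mono {I J : Ideal R} (h : I ≤ J) :
    congruenceSubgroup n I ≤ congruenceSubgroup n J := fun _ hg ↦
  mem_congruenceSubgroup_iff.2 fun i j ↦ h (mem_congruenceSubgroup_iff.1 hg i j)

lemma mem_congruenceSubgroup_span_iff {q : R} {g : SpecialLinearGroup n R} :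
    g ∈ Γ(n,q) ↔ ∀ i j, q ∣ g i j - (1 : Matrix n n R) i j := by
  simp only [mem_congruenceSubgroup_iff, Ideal.mem_span_singleton]

lemma mem_congruenceSubgroup_fin_two {q : R} {X : SpecialLinearGroup (Fin 2) R} :
    X ∈ Γ(Fin 2,q) ↔ q ∣ X 0 0 - 1 ∧ q ∣ X 0 1 ∧ q ∣ X 1 0 ∧ q ∣ X 1 1 - 1 := by
  simp [mem_congruenceSubgroup_span_iff, Fin.forall_fin_two, and_assoc]

lemma transpose_mem_congruenceSubgroup {I : Ideal R} {g : SpecialLinearGroup n R}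
    (hg : g ∈ congruenceSubgroup n I) : g.transpose ∈ congruenceSubgroup n I :=
  mem_congruenceSubgroup_iff.2 fun i j ↦ by
    simpa [one_apply, eq_comm] using mem_congruenceSubgroup_iff.1 hg j i

lemma map_mem_congruenceSubgroup {q : R} {g : SpecialLinearGroup n R} (f : R →+* S)
    (hg : g ∈ Γ(n,q)) : SpecialLinearGroup.map f g ∈ Γ(n,f q) :=
  mem_congruenceSubgroup_span_iff.2 fun i j ↦ by
    simpa [one_apply, apply_ite f] using
      map_dvd f (mem_congruenceSubgroup_span_iff.1 hg i j)

end CongruenceSubgroup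

section Elementary

variable {n : Type*} [Fintype n] [DecidableEq n] {R : Type*} [CommRing R]

/-- The elementary matrix with `t` in position `(i, j)`, its indices being explicit and their
distinctness being decided where they are numerals. -/
abbrev elem (i j : n) (t : R) (hij : i ≠ j := by decide) : SpecialLinearGroup n R :=
  transvection hij t

lemma elem_apply {i j : n} (hij : i ≠ j) (t : R) (k l : n) :
    elem i j t hij k l = (if k = l then 1 else 0) + if i = k ∧ j = l then t else 0 := by
  simp [transvection_coe, one_apply, single_apply]

lemma elem_mem_congruenceSubgroup {i j : n} (hij : i ≠ j) {q t : R} (ht : q ∣ t) :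
    elem i j t hij ∈ Γ(n,q) :=
  mem_congruenceSubgroup_span_iff.2 fun k l ↦ by
    by_cases h : i = k ∧ j = l <;> simp [transvection_coe, h, ht]

lemma commutatorElement_elem {i j k : n} (hij : i ≠ j) (hjk : j ≠ k) (hik : i ≠ k) (a b : R) :
    ⁅elem i j a hij, elem j k b hjk⁆ = elem i k (a * b) hik := by
  rw [commutatorElement_def, transvection_inv, transvection_inv]
  refine Subtype.ext ?_
  simp [transvection_coe, mul_add, add_mul, hij.symm, hjk.symm, hik.symm,
    single_mul_single_of_ne, ← single_neg]
  abel

/-- `E` contains the elementary matrices of level `q`. -/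
def ContainsElementary (E : Subgroup (SpecialLinearGroup n R)) (q : R) : Prop :=
  ∀ ⦃i j : n⦄ (hij : i ≠ j) ⦃t : R⦄, q ∣ t → elem i j t hij ∈ E

lemma containsElementary_commutator (q : R) :
    ContainsElementary ⁅Γ(Fin 3,q), Γ(Fin 3,q)⁆ (q ^ 2) := by
  rintro i k hik _ ⟨t, rfl⟩
  obtain ⟨j, hij, hjk⟩ : ∃ j, i ≠ j ∧ j ≠ k := by decide +revert
  rw [show q ^ 2 * t = q * (q * t) by ring, ← commutatorElement_elem hij hjk hik]
  exact Subgroup.commutator_mem_commutator (elem_mem_congruenceSubgroup hij dvd_rfl)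
    (elem_mem_congruenceSubgroup hjk (dvd_mul_right q t))

end Elementary

section Block

variable {R : Type*} [CommRing R]

lemma det_fin_two_eq_one (X : SpecialLinearGroup (Fin 2) R) :
    X 0 0 * X 1 1 - X 0 1 * X 1 0 = 1 := by
  rw [← det_fin_two, X.det_coe]

/-- The embedding of `SL₂` in `SL₃` acting on the first two coordinates. -/
def block₀₁ (X : SpecialLinearGroup (Fin 2) R) : SpecialLinearGroup (Fin 3) R :=
  ⟨!![X 0 0, X 0 1, 0; X 1 0, X 1 1, 0; 0, 0, 1], by
    simpa [det_fin_three] using det_fin_two_eq_one X⟩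

/-- The embedding of `SL₂` in `SL₃` acting on the first and the last coordinate. -/
def block₀₂ (X : SpecialLinearGroup (Fin 2) R) : SpecialLinearGroup (Fin 3) R :=
  ⟨!![X 0 0, 0, X 0 1; 0, 1, 0; X 1 0, 0, X 1 1], by
    simpa [det_fin_three] using det_fin_two_eq_one X⟩

/-- The embedding of `SL₂` in `SL₃` acting on the last two coordinates. -/
def block₁₂ (X : SpecialLinearGroup (Fin 2) R) : SpecialLinearGroup (Fin 3) R :=
  ⟨!![1, 0, 0; 0, X 0 0, X 0 1; 0, X 1 0, X 1 1], by
    simpa [det_fin_three] using det_fin_two_eq_one X⟩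

lemma coe_block₀₁ (X : SpecialLinearGroup (Fin 2) R) :
    (block₀₁ X : Matrix (Fin 3) (Fin 3) R) =
      !![X 0 0, X 0 1, 0; X 1 0, X 1 1, 0; 0, 0, 1] := rfl

lemma coe_block₀₂ (X : SpecialLinearGroup (Fin 2) R) :
    (block₀₂ X : Matrix (Fin 3) (Fin 3) R) =
      !![X 0 0, 0, X 0 1; 0, 1, 0; X 1 0, 0, X 1 1] := rfl

lemma coe_block₁₂ (X : SpecialLinearGroup (Fin 2) R) :
    (block₁₂ X : Matrix (Fin 3) (Fin 3) R) =
      !![1, 0, 0; 0, X 0 0, X 0 1; 0, X 1 0, X 1 1] := rfl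

lemma block₀₁_mul (X Y : SpecialLinearGroup (Fin 2) R) :
    block₀₁ (X * Y) = block₀₁ X * block₀₁ Y := by
  ext k l
  fin_cases k <;> fin_cases l <;> simp [coe_block₀₁, mul_apply, Fin.sum_univ_succ]

lemma block₀₁_elem {i j : Fin 2} (hij : i ≠ j) (t : R) :
    block₀₁ (elem i j t hij) =
      elem i.castSucc j.castSucc t ((Fin.castSucc_injective 2).ne hij) := by
  ext k l
  fin_cases i <;> fin_cases j <;> try exact absurd rfl hij
  all_goals fin_cases k <;> fin_cases l <;> simp [coe_block₀₁, elem_apply]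

lemma block₀₁_mul_elem (X : SpecialLinearGroup (Fin 2) R) (i : Fin 2) (t : R) :
    block₀₁ X * elem i.castSucc 2 t i.castSucc_ne_last =
      elem 0 2 ((X 0 i - (1 : Matrix (Fin 2) (Fin 2) R) 0 i) * t) *
        elem 1 2 ((X 1 i - (1 : Matrix (Fin 2) (Fin 2) R) 1 i) * t) *
        elem i.castSucc 2 t i.castSucc_ne_last * block₀₁ X := by
  ext k l
  obtain rfl | rfl : i = 0 ∨ i = 1 := by lia
  all_goals
    fin_cases k <;> fin_cases l <;>
      simp [coe_block₀₁, elem_apply, mul_apply, Fin.sum_univ_three, sub_mul, -cons_mul]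

lemma elem_mul_block₀₁ (X : SpecialLinearGroup (Fin 2) R) (i : Fin 2) (t : R) :
    elem 2 i.castSucc t i.castSucc_ne_last.symm * block₀₁ X =
      block₀₁ X * elem 2 i.castSucc t i.castSucc_ne_last.symm *
        elem 2 0 (t * (X i 0 - (1 : Matrix (Fin 2) (Fin 2) R) i 0)) *
        elem 2 1 (t * (X i 1 - (1 : Matrix (Fin 2) (Fin 2) R) i 1)) := by
  ext k l
  obtain rfl | rfl : i = 0 ∨ i = 1 := by lia
  all_goals
    fin_cases k <;> fin_cases l <;>
      simp [coe_block₀₁, elem_apply, mul_apply, Fin.sum_univ_three, mul_sub, -cons_mul]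

/-- The rotation by a right angle in the plane of the coordinates `i` and `j`, written as a
product of elementary matrices. -/
def rotation (i j : Fin 3) (hij : i ≠ j := by decide) : SpecialLinearGroup (Fin 3) R :=
  elem i j (-1) hij * elem j i 1 hij.symm * elem i j (-1) hij

lemma rotation_mul_block₀₁_eq_block₀₂ (X : SpecialLinearGroup (Fin 2) R) :
    rotation 1 2 * block₀₁ X = block₀₂ X * rotation 1 2 := by
  ext k l
  fin_cases k <;> fin_cases l <;> simp [rotation, coe_block₀₁, coe_block₀₂, elem_apply,
    mul_apply, Fin.sum_univ_three]

lemma rotation_mul_block₀₂_eq_block₁₂ (X : SpecialLinearGroup (Fin 2) R) :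
    rotation 0 1 * block₀₂ X = block₁₂ X * rotation 0 1 := by
  ext k l
  fin_cases k <;> fin_cases l <;> simp [rotation, coe_block₀₂, coe_block₁₂, elem_apply,
    mul_apply, Fin.sum_univ_three]

lemma rotation_mul_block₀₁_eq_transpose_inv (X : SpecialLinearGroup (Fin 2) R) :
    rotation 0 1 * block₀₁ X = block₀₁ X.transpose⁻¹ * rotation 0 1 := by
  ext k l
  fin_cases k <;> fin_cases l <;> simp [rotation, coe_block₀₁, elem_apply, adjugate_fin_two,
    mul_apply, Fin.sum_univ_three]

variable {E : Subgroup (SpecialLinearGroup (Fin 3) R)} [E.Normal] {Q : R}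
  {X Y : SpecialLinearGroup (Fin 2) R}

variable (E) in
/-- The class modulo `E` of a matrix of size two placed in the upper left corner. -/
def blockClass : SpecialLinearGroup (Fin 2) R →* SpecialLinearGroup (Fin 3) R ⧸ E :=
  MonoidHom.mk' (fun X ↦ (block₀₁ X : SpecialLinearGroup (Fin 3) R ⧸ E)) fun X Y ↦ by
    rw [block₀₁_mul, QuotientGroup.mk_mul]

lemma coe_block₀₁_eq_blockClass (X : SpecialLinearGroup (Fin 2) R) :
    (block₀₁ X : SpecialLinearGroup (Fin 3) R ⧸ E) = blockClass E X := rfl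

lemma ContainsElementary.coe_elem_eq_one {n : Type*} [Fintype n] [DecidableEq n]
    {E : Subgroup (SpecialLinearGroup n R)} [E.Normal] (hE : ContainsElementary E Q)
    {i j : n} (hij : i ≠ j) {t : R} (ht : Q ∣ t) :
    (elem i j t hij : SpecialLinearGroup n R ⧸ E) = 1 :=
  (QuotientGroup.eq_one_iff _).2 (hE hij ht)

lemma blockClass_elem_eq_one (hE : ContainsElementary E Q) {i j : Fin 2} (hij : i ≠ j) {t : R}
    (ht : Q ∣ t) : blockClass E (elem i j t hij) = 1 := by
  rw [← coe_block₀₁_eq_blockClass, block₀₁_elem]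
  exact hE.coe_elem_eq_one _ ht

lemma commute_blockClass_elem_castSucc_two (hE : ContainsElementary E Q) (hX : X ∈ Γ(Fin 2,Q))
    (i : Fin 2) (t : R) : Commute (blockClass E X) (elem i.castSucc 2 t i.castSucc_ne_last) := by
  rw [mem_congruenceSubgroup_span_iff] at hX
  have := congrArg (QuotientGroup.mk (s := E)) (block₀₁_mul_elem X i t)
  simp only [QuotientGroup.mk_mul, hE.coe_elem_eq_one _ ((hX 0 i).mul_right t),
    hE.coe_elem_eq_one _ ((hX 1 i).mul_right t), one_mul] at this
  exact this

lemma commute_blockClass_elem_two_castSucc (hE : ContainsElementary E Q) (hX : X ∈ Γ(Fin 2,Q))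
    (i : Fin 2) (t : R) :
    Commute (blockClass E X) (elem 2 i.castSucc t i.castSucc_ne_last.symm) := by
  rw [mem_congruenceSubgroup_span_iff] at hX
  have := congrArg (QuotientGroup.mk (s := E)) (elem_mul_block₀₁ X i t)
  simp only [QuotientGroup.mk_mul, hE.coe_elem_eq_one _ ((hX i 0).mul_left t),
    hE.coe_elem_eq_one _ ((hX i 1).mul_left t), mul_one] at this
  exact this.symm

lemma commute_blockClass_elem (hE : ContainsElementary E Q) (hX : X ∈ Γ(Fin 2,Q))
    {i j : Fin 3} (hij : i ≠ j) (t : R) : Commute (blockClass E X) (elem i j t hij) := by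
  induction i using Fin.lastCases with
  | last =>
    induction j using Fin.lastCases with
    | last => exact absurd rfl hij
    | cast j => exact commute_blockClass_elem_two_castSucc hE hX j t
  | cast i =>
    induction j using Fin.lastCases with
    | last => exact commute_blockClass_elem_castSucc_two hE hX i t
    | cast j =>
      have h := commute_blockClass_elem_castSucc_two hE hX i t
      have h' := commute_blockClass_elem_two_castSucc hE hX j 1
      rw [← mul_one t, ← commutatorElement_elem i.castSucc_ne_last j.castSucc_ne_last.symm hij]
      exact ((h.mul_right h').mul_right h.inv_right).mul_right h'.inv_right

lemma commute_blockClass_rotation (hE : ContainsElementary E Q) (hX : X ∈ Γ(Fin 2,Q))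
    {i j : Fin 3} (hij : i ≠ j) :
    Commute (blockClass E X) (rotation (R := R) i j hij) :=
  ((commute_blockClass_elem hE hX _ _).mul_right (commute_blockClass_elem hE hX _ _)).mul_right
    (commute_blockClass_elem hE hX _ _)

lemma coe_block₀₂_eq_blockClass (hE : ContainsElementary E Q) (hX : X ∈ Γ(Fin 2,Q)) :
    (block₀₂ X : SpecialLinearGroup (Fin 3) R ⧸ E) = blockClass E X := by
  have := congrArg (QuotientGroup.mk (s := E)) (rotation_mul_block₀₁_eq_block₀₂ X)
  rw [QuotientGroup.mk_mul, QuotientGroup.mk_mul, coe_block₀₁_eq_blockClass,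
    ← (commute_blockClass_rotation hE hX _).eq] at this
  exact (mul_right_cancel this).symm

lemma coe_block₁₂_eq_blockClass (hE : ContainsElementary E Q) (hX : X ∈ Γ(Fin 2,Q)) :
    (block₁₂ X : SpecialLinearGroup (Fin 3) R ⧸ E) = blockClass E X := by
  have := congrArg (QuotientGroup.mk (s := E)) (rotation_mul_block₀₂_eq_block₁₂ X)
  rw [QuotientGroup.mk_mul, QuotientGroup.mk_mul, coe_block₀₂_eq_blockClass hE hX,
    ← (commute_blockClass_rotation hE hX _).eq] at this
  exact (mul_right_cancel this).symm

lemma blockClass_transpose (hE : ContainsElementary E Q) (hX : X ∈ Γ(Fin 2,Q)) :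
    blockClass E X.transpose = (blockClass E X)⁻¹ := by
  have := congrArg (QuotientGroup.mk (s := E)) (rotation_mul_block₀₁_eq_transpose_inv X)
  rw [QuotientGroup.mk_mul, QuotientGroup.mk_mul, coe_block₀₁_eq_blockClass,
    ← (commute_blockClass_rotation hE hX _).eq, coe_block₀₁_eq_blockClass, map_inv] at this
  rw [mul_right_cancel this, inv_inv]

lemma mul_inv_eq_elem_of_row_eq (h₀ : X 0 0 = Y 0 0) (h₁ : X 0 1 = Y 0 1) :
    X * Y⁻¹ = elem 1 0 (X 1 0 * Y 1 1 - X 1 1 * Y 1 0) := by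
  have hX := det_fin_two_eq_one X
  have hY := det_fin_two_eq_one Y
  ext k l
  fin_cases k <;> fin_cases l <;>
    simp [elem_apply, adjugate_fin_two, mul_apply] <;> grind

lemma blockClass_eq_of_row_eq (hE : ContainsElementary E Q) (hX : X ∈ Γ(Fin 2,Q))
    (hY : Y ∈ Γ(Fin 2,Q)) (h₀ : X 0 0 = Y 0 0) (h₁ : X 0 1 = Y 0 1) :
    blockClass E X = blockClass E Y := by
  have hQ : Q ∣ X 1 0 * Y 1 1 - X 1 1 * Y 1 0 :=
    dvd_sub ((mem_congruenceSubgroup_fin_two.1 hX).2.2.1.mul_right _)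
      ((mem_congruenceSubgroup_fin_two.1 hY).2.2.1.mul_left _)
  rw [← mul_inv_eq_one, ← map_inv, ← map_mul, mul_inv_eq_elem_of_row_eq h₀ h₁]
  exact blockClass_elem_eq_one hE _ hQ

end Block

section Symbol

variable {R : Type*} [CommRing R] {Q a b b' : R}

/-- The pairs `(a, b)` which are first rows of matrices of `SL₂(R)[Q]`, characterized by
congruences modulo `Q` and coprimality. -/
structure IsMennickePair (Q a b : R) : Prop where
  dvd_sub_one : Q ∣ a - 1
  dvd : Q ∣ b
  isCoprime : IsCoprime a b

lemma isMennickePair_of_mem {X : SpecialLinearGroup (Fin 2) R} (hX : X ∈ Γ(Fin 2,Q)) :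
    IsMennickePair Q (X 0 0) (X 0 1) := by
  obtain ⟨h₀₀, h₀₁, -, -⟩ := mem_congruenceSubgroup_fin_two.1 hX
  exact ⟨h₀₀, h₀₁, X 1 1, -X 1 0, by linear_combination det_fin_two_eq_one X⟩

lemma isMennickePair_mul_level {u : R} (h : Q ∣ a - 1) (hu : IsCoprime a u) :
    IsMennickePair Q a (Q * u) := by
  obtain ⟨s, hs⟩ := h
  exact ⟨⟨s, hs⟩, dvd_mul_right Q u, IsCoprime.mul_right ⟨1, -s, by linear_combination hs⟩ hu⟩

namespace IsMennickePair

lemma mul (h : IsMennickePair Q a b) (h' : IsMennickePair Q a b') :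
    IsMennickePair Q a (b * b') :=
  ⟨h.dvd_sub_one, h.dvd.mul_right b', h.isCoprime.mul_right h'.isCoprime⟩

lemma add_mul_left (h : IsMennickePair Q a b) (t : R) : IsMennickePair Q (a + t * b) b :=
  ⟨by simpa [add_sub_right_comm] using dvd_add h.dvd_sub_one (h.dvd.mul_left t), h.dvd,
    h.isCoprime.add_mul_right_left t⟩

lemma add_mul_right (h : IsMennickePair Q a b) {t : R} (ht : Q ∣ t) :
    IsMennickePair Q a (b + t * a) :=
  ⟨h.dvd_sub_one, dvd_add h.dvd (ht.mul_right a), h.isCoprime.add_mul_right_right t⟩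

lemma exists_mem (h : IsMennickePair Q a b) : ∃ X ∈ Γ(Fin 2,Q), X 0 0 = a ∧ X 0 1 = b := by
  obtain ⟨⟨s, hs⟩, ⟨t, rfl⟩, x, y, hxy⟩ := h
  obtain rfl : a = 1 + Q * s := by rw [← hs, add_sub_cancel]
  refine ⟨⟨!![1 + Q * s, Q * t; -(Q * t) * y ^ 2, x * (1 + Q * t * y)], ?_⟩,
    mem_congruenceSubgroup_fin_two.2 ⟨⟨s, ?_⟩, ⟨t, rfl⟩, ⟨-t * y ^ 2, ?_⟩,
      ⟨x * t * y - x * s - t * y, ?_⟩⟩, rfl, rfl⟩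
  · rw [det_fin_two_of]
    linear_combination (1 + Q * t * y) * hxy
  · exact hs
  · simp [mul_assoc]
  · simp only [of_apply, cons_val', cons_val_one, cons_val_fin_one]
    linear_combination hxy

end IsMennickePair

variable (E : Subgroup (SpecialLinearGroup (Fin 3) R)) [E.Normal]

open Classical in
/-- The Mennicke symbol of `(a, b)`: the class modulo `E` of any matrix of `SL₂(R)[Q]` with first
row `(a, b)`. Its value is `1` if there is no such matrix. -/
noncomputable def mennickeSymbol (Q a b : R) : SpecialLinearGroup (Fin 3) R ⧸ E :=
  if h : ∃ X ∈ Γ(Fin 2,Q), X 0 0 = a ∧ X 0 1 = b then blockClass E h.choose else 1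

variable {E} (hE : ContainsElementary E Q)
include hE

lemma blockClass_eq_mennickeSymbol {X : SpecialLinearGroup (Fin 2) R} (hX : X ∈ Γ(Fin 2,Q)) :
    blockClass E X = mennickeSymbol E Q (X 0 0) (X 0 1) := by
  have h : ∃ Y ∈ Γ(Fin 2,Q), Y 0 0 = X 0 0 ∧ Y 0 1 = X 0 1 := ⟨X, hX, rfl, rfl⟩
  rw [mennickeSymbol, dif_pos h]
  obtain ⟨hY, h₀, h₁⟩ := h.choose_spec
  exact blockClass_eq_of_row_eq hE hX hY h₀.symm h₁.symm

lemma mennickeSymbol_add_mul_right (h : IsMennickePair Q a b) {t : R} (ht : Q ∣ t) :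
    mennickeSymbol E Q a (b + t * a) = mennickeSymbol E Q a b := by
  obtain ⟨X, hX, rfl, rfl⟩ := h.exists_mem
  have h01 : (0 : Fin 2) ≠ 1 := by decide
  have hXt := blockClass_eq_mennickeSymbol hE
    (mul_mem hX (elem_mem_congruenceSubgroup h01 ht))
  rw [map_mul, blockClass_elem_eq_one hE h01 ht, mul_one, blockClass_eq_mennickeSymbol hE hX] at hXt
  simpa [elem_apply, mul_apply, add_comm, mul_comm t] using hXt.symm

lemma mennickeSymbol_add_mul_left (h : IsMennickePair Q a b) (t : R) :
    mennickeSymbol E Q (a + t * b) b = mennickeSymbol E Q a b := by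
  obtain ⟨X, hX, rfl, rfl⟩ := h.exists_mem
  have h10 : (1 : Fin 2) ≠ 0 := by decide
  have hcomm : Commute (blockClass E X) (blockClass E (elem 1 0 t)) := by
    rw [← coe_block₀₁_eq_blockClass (elem 1 0 t), block₀₁_elem]
    exact commute_blockClass_elem hE hX _ t
  have hconj := blockClass_eq_mennickeSymbol hE
    ((congruenceSubgroup_normal _).conj_mem' X hX (elem 1 0 t h10))
  rw [map_mul, map_mul, map_inv, mul_assoc, hcomm.eq, inv_mul_cancel_left,
    blockClass_eq_mennickeSymbol hE hX, transvection_inv] at hconj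
  simpa [elem_apply, mul_apply, mul_comm t] using hconj.symm

lemma mennickeSymbol_one_left (hb : Q ∣ b) : mennickeSymbol E Q 1 b = 1 := by
  have h0 : IsMennickePair Q 1 0 := ⟨by simp, dvd_zero Q, isCoprime_one_left⟩
  have h := mennickeSymbol_add_mul_right hE h0 hb
  rw [zero_add, mul_one] at h
  simpa [h] using (blockClass_eq_mennickeSymbol hE (one_mem _)).symm

omit hE in
/- This identity, modulo the elementary matrices, is the multiplicativity of the symbol. -/
lemma exists_block₀₂_eq {X Y : SpecialLinearGroup (Fin 2) R} (hX : X ∈ Γ(Fin 2,Q))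
    (hY : Y ∈ Γ(Fin 2,Q)) (h : X 0 0 = Y 0 0) :
    ∃ Z ∈ Γ(Fin 2,Q), Z 0 0 = X 0 0 ∧ Z 0 1 = X 0 1 * Y 0 1 ∧
      block₀₂ Z = elem 2 1 (-Y 1 0) * (block₀₁ X * block₁₂ Y) *
        (elem 0 1 (-X 0 1) * elem 1 0 (-X 1 0) * elem 1 2 (-X 1 1 * Y 0 1)) := by
  have hdX := det_fin_two_eq_one X
  have hdY := det_fin_two_eq_one Y
  obtain ⟨h₀₀, h₀₁, -, -⟩ := mem_congruenceSubgroup_fin_two.1 hX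
  obtain ⟨-, h₀₁', h₁₀', h₁₁'⟩ := mem_congruenceSubgroup_fin_two.1 hY
  obtain ⟨Z, hZ⟩ : ∃ Z : SpecialLinearGroup (Fin 2) R, (Z : Matrix (Fin 2) (Fin 2) R) =
      !![X 0 0, X 0 1 * Y 0 1; -X 1 0 * Y 1 0, Y 1 1 - Y 1 0 * X 1 1 * Y 0 1] :=
    ⟨⟨_, by rw [det_fin_two_of]; grind⟩, rfl⟩
  refine ⟨Z, mem_congruenceSubgroup_fin_two.2 ?_, by simp [hZ], by simp [hZ], ?_⟩
  · simpa [hZ, sub_right_comm, h₀₀] using ⟨h₀₁.mul_right _, h₁₀'.mul_left (X 1 0),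
      dvd_sub h₁₁' (h₀₁'.mul_left (Y 1 0 * X 1 1))⟩
  · ext k l
    fin_cases k <;> fin_cases l <;>
      simp [coe_block₀₁, coe_block₀₂, coe_block₁₂, hZ, elem_apply, mul_apply, Fin.sum_univ_three,
        -cons_mul] <;> grind

lemma mennickeSymbol_mul (h : IsMennickePair Q a b) (h' : IsMennickePair Q a b') :
    mennickeSymbol E Q a (b * b') = mennickeSymbol E Q a b * mennickeSymbol E Q a b' := by
  obtain ⟨X, hX, rfl, rfl⟩ := h.exists_mem
  obtain ⟨Y, hY, hXY, rfl⟩ := h'.exists_mem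
  obtain ⟨Z, hZ, hZ₀, hZ₁, hZXY⟩ := exists_block₀₂_eq hX hY hXY.symm
  obtain ⟨-, h₀₁, h₁₀, -⟩ := mem_congruenceSubgroup_fin_two.1 hX
  obtain ⟨-, h₀₁', h₁₀', -⟩ := mem_congruenceSubgroup_fin_two.1 hY
  have := congrArg (QuotientGroup.mk (s := E)) hZXY
  simp only [QuotientGroup.mk_mul, hE.coe_elem_eq_one _ (dvd_neg.2 h₁₀'),
    hE.coe_elem_eq_one _ (dvd_neg.2 h₀₁), hE.coe_elem_eq_one _ (dvd_neg.2 h₁₀),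
    hE.coe_elem_eq_one _ (h₀₁'.mul_left (-X 1 1)), one_mul, mul_one,
    coe_block₀₂_eq_blockClass hE hZ, coe_block₁₂_eq_blockClass hE hY,
    coe_block₀₁_eq_blockClass] at this
  rwa [blockClass_eq_mennickeSymbol hE hX, blockClass_eq_mennickeSymbol hE hY,
    blockClass_eq_mennickeSymbol hE hZ, hZ₀, hZ₁, hXY] at this

lemma mennickeSymbol_level_mul_unit (h : Q ∣ a - 1) {u : R} (hu : IsUnit u) :
    mennickeSymbol E Q a (Q * u) = 1 := by
  obtain ⟨s, hs⟩ := h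
  obtain ⟨v, hv⟩ := hu.exists_left_inv
  have h1 : IsMennickePair Q 1 (Q * u) := isMennickePair_mul_level (by simp) isCoprime_one_left
  have ha : a = 1 + s * v * (Q * u) := by linear_combination hs - Q * s * hv
  rw [ha, mennickeSymbol_add_mul_left hE h1, mennickeSymbol_one_left hE h1.dvd]

lemma mennickeSymbol_level_mul (h : IsMennickePair Q a b) :
    mennickeSymbol E Q a (Q * b) = mennickeSymbol E Q a b := by
  have hQ := isMennickePair_mul_level h.dvd_sub_one (isCoprime_one_right (x := a))
  have hQ1 := mennickeSymbol_level_mul_unit hE h.dvd_sub_one isUnit_one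
  rw [mul_one] at hQ hQ1
  rw [mennickeSymbol_mul hE hQ h, hQ1, one_mul]

lemma mennickeSymbol_level_mul_mul (h : Q ∣ a - 1) {x y : R} (hx : IsCoprime a x)
    (hy : IsCoprime a y) : mennickeSymbol E Q a (Q * (x * y)) =
      mennickeSymbol E Q a (Q * x) * mennickeSymbol E Q a (Q * y) := by
  rw [← mennickeSymbol_mul hE (isMennickePair_mul_level h hx) (isMennickePair_mul_level h hy),
    ← mennickeSymbol_level_mul hE (isMennickePair_mul_level h (hx.mul_right hy))]
  congr 1
  ring

lemma mennickeSymbol_level_mul_pow (h : Q ∣ a - 1) {x : R} (hx : IsCoprime a x) (k : ℕ) :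
    mennickeSymbol E Q a (Q * x ^ k) = mennickeSymbol E Q a (Q * x) ^ k := by
  induction k with
  | zero => simpa using mennickeSymbol_level_mul_unit hE h isUnit_one
  | succ k ih => rw [pow_succ, mennickeSymbol_level_mul_mul hE h hx.pow_right hx, ih, pow_succ]

lemma mennickeSymbol_unit_mul (h : IsMennickePair Q a b) {u : R} (hu : IsUnit u) :
    mennickeSymbol E Q a (u * b) = mennickeSymbol E Q a b := by
  have hub : IsMennickePair Q a (u * b) := ⟨h.dvd_sub_one, h.dvd.mul_left u,
    (isCoprime_mul_unit_left_right hu a b).2 h.isCoprime⟩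
  have hau : IsCoprime a u := isCoprime_one_right.of_isCoprime_of_dvd_right hu.dvd
  rw [← mennickeSymbol_level_mul hE hub, ← mul_assoc,
    mennickeSymbol_mul hE (isMennickePair_mul_level h.dvd_sub_one hau) h,
    mennickeSymbol_level_mul_unit hE h.dvd_sub_one hu, one_mul]

lemma mennickeSymbol_sq_eq_one (h : IsMennickePair Q a b) (hb : b ∣ a ^ 2 - 1) :
    mennickeSymbol E Q a b ^ 2 = 1 := by
  obtain ⟨X, hX, rfl, rfl⟩ := h.exists_mem
  obtain ⟨z, hz⟩ := hb
  have hneg : IsMennickePair Q (X 0 0) (-X 0 1) :=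
    ⟨h.dvd_sub_one, dvd_neg.2 h.dvd, h.isCoprime.neg_right⟩
  have h₁₁ : X 1 1 = X 0 0 + (X 1 1 * z - X 0 0 * X 1 0) * -X 0 1 := by
    linear_combination X 0 0 * det_fin_two_eq_one X - X 1 1 * hz
  have hinv : (mennickeSymbol E Q (X 0 0) (X 0 1))⁻¹ = mennickeSymbol E Q (X 0 0) (X 0 1) :=
    calc (mennickeSymbol E Q (X 0 0) (X 0 1))⁻¹
      _ = blockClass E X⁻¹ := by rw [map_inv, blockClass_eq_mennickeSymbol hE hX]
      _ = mennickeSymbol E Q (X 1 1) (-X 0 1) := by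
        simpa [adjugate_fin_two] using blockClass_eq_mennickeSymbol hE (inv_mem hX)
      _ = mennickeSymbol E Q (X 0 0) (-X 0 1) := by
        rw [h₁₁, mennickeSymbol_add_mul_left hE hneg]
      _ = mennickeSymbol E Q (X 0 0) (X 0 1) := by
        rw [← neg_one_mul, mennickeSymbol_unit_mul hE h isUnit_one.neg]
  rw [sq]
  exact inv_eq_iff_mul_eq_one.1 hinv

variable {X Y : SpecialLinearGroup (Fin 2) R} {f g : R}

lemma blockClass_sq_eq_mennickeSymbol_sq (hX : X ∈ Γ(Fin 2,Q)) (hY : Y ∈ Γ(Fin 2,Q))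
    (hXY : (Y : Matrix (Fin 2) (Fin 2) R) = f • 1 + g • (X : Matrix (Fin 2) (Fin 2) R))
    (ha : X 0 1 ∣ Y 0 0 - a) : blockClass E Y ^ 2 = mennickeSymbol E Q a (X 0 1) ^ 2 := by
  have hYpair := isMennickePair_of_mem hY
  obtain ⟨h₀₀, h₀₁, -, h₁₁⟩ := mem_congruenceSubgroup_fin_two.1 hX
  have hY₀₀ : Y 0 0 = f + g * X 0 0 := by simpa using congrFun₂ hXY 0 0
  have hY₀₁ : Y 0 1 = g * X 0 1 := by simpa using congrFun₂ hXY 0 1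
  have hY₁₀ : Y 1 0 = g * X 1 0 := by simpa using congrFun₂ hXY 1 0
  have hY₁₁ : Y 1 1 = f + g * X 1 1 := by simpa using congrFun₂ hXY 1 1
  have hco : IsCoprime (Y 0 0) (g * X 0 1) := hY₀₁ ▸ hYpair.isCoprime
  have hb : IsMennickePair Q (Y 0 0) (X 0 1) :=
    ⟨hYpair.dvd_sub_one, h₀₁, hco.of_mul_right_right⟩
  have hg := isMennickePair_mul_level hYpair.dvd_sub_one hco.of_mul_right_left
  have hsplit : blockClass E Y =
      mennickeSymbol E Q (Y 0 0) (Q * g) * mennickeSymbol E Q (Y 0 0) (X 0 1) := by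
    rw [blockClass_eq_mennickeSymbol hE hY, ← mennickeSymbol_level_mul hE hYpair, hY₀₁,
      ← mul_assoc, mennickeSymbol_mul hE hg hb]
  have hcomm : Commute (mennickeSymbol E Q (Y 0 0) (Q * g))
      (mennickeSymbol E Q (Y 0 0) (X 0 1)) := by
    rw [commute_iff_eq, ← mennickeSymbol_mul hE hg hb, ← mennickeSymbol_mul hE hb hg, mul_comm]
  have hgsq : mennickeSymbol E Q (Y 0 0) (Q * g) ^ 2 = 1 := by
    refine mennickeSymbol_sq_eq_one hE hg ?_
    have : Y 0 0 ^ 2 - 1 =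
        (f * ((X 0 0 - 1) - (X 1 1 - 1)) + g * ((X 0 0 - 1) * (X 0 0 + 1))) * g := by
      grind [det_fin_two_eq_one X, det_fin_two_eq_one Y]
    rw [this]
    exact mul_dvd_mul_right (dvd_add ((dvd_sub h₀₀ h₁₁).mul_left f)
      ((h₀₀.mul_right _).mul_left g)) g
  obtain ⟨z, hz⟩ := ha
  have haz : a = Y 0 0 + -z * X 0 1 := by linear_combination -hz
  rw [hsplit, hcomm.mul_pow, hgsq, one_mul, haz, mennickeSymbol_add_mul_left hE hb]

lemma blockClass_sq_eq_inv_mennickeSymbol_sq (hX : X ∈ Γ(Fin 2,Q)) (hY : Y ∈ Γ(Fin 2,Q))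
    (hXY : (Y : Matrix (Fin 2) (Fin 2) R) = f • 1 + g • (X : Matrix (Fin 2) (Fin 2) R))
    (ha : X 1 0 ∣ Y 0 0 - a) : blockClass E Y ^ 2 = (mennickeSymbol E Q a (X 1 0) ^ 2)⁻¹ := by
  have hXYt : (Y.transpose : Matrix (Fin 2) (Fin 2) R) =
      f • 1 + g • (X.transpose : Matrix (Fin 2) (Fin 2) R) := by
    simp [hXY, transpose_add]
  have h := blockClass_sq_eq_mennickeSymbol_sq hE (transpose_mem_congruenceSubgroup hX)
    (transpose_mem_congruenceSubgroup hY) hXYt (a := a) ha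
  rw [blockClass_transpose hE hY, inv_pow] at h
  exact inv_eq_iff_eq_inv.1 h

end Symbol

section Powers

variable {R : Type*} [CommRing R]

lemma exists_pow_eq_smul_one_add_smul (M : Matrix (Fin 2) (Fin 2) R) (k : ℕ) :
    ∃ f g : R, M ^ k = f • (1 : Matrix (Fin 2) (Fin 2) R) + g • M := by
  induction k with
  | zero => exact ⟨1, 0, by simp⟩
  | succ k ih =>
    obtain ⟨f, g, h⟩ := ih
    have cayleyHamilton : M * M = M.trace • M - M.det • (1 : Matrix (Fin 2) (Fin 2) R) := by
      ext i j
      fin_cases i <;> fin_cases j <;> simp [mul_apply, trace_fin_two, det_fin_two] <;> ring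
    refine ⟨-g * M.det, f + g * M.trace, ?_⟩
    rw [pow_succ, h, add_mul, smul_mul_assoc, smul_mul_assoc, one_mul, cayleyHamilton]
    module

lemma apply_zero_one_dvd_pow_sub_pow (M : Matrix (Fin 2) (Fin 2) R) (k : ℕ) :
    M 0 1 ∣ (M ^ k) 0 0 - M 0 0 ^ k := by
  induction k with
  | zero => simp
  | succ k ih =>
    obtain ⟨z, hz⟩ := ih
    rw [pow_succ', mul_apply, Fin.sum_univ_two]
    exact ⟨M 0 0 * z + (M ^ k) 1 0, by linear_combination M 0 0 * hz⟩

lemma apply_one_zero_dvd_pow_sub_pow (M : Matrix (Fin 2) (Fin 2) R) (k : ℕ) :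
    M 1 0 ∣ (M ^ k) 0 0 - M 0 0 ^ k := by
  simpa [← transpose_pow] using apply_zero_one_dvd_pow_sub_pow Mᵀ k

end Powers

section Pi

variable {n : Type*} [Fintype n] [DecidableEq n] {ι A : Type*} [CommRing A]

/-- A matrix over a power of a ring as a family of matrices over that ring. -/
def piEquiv : SpecialLinearGroup n (ι → A) ≃* (ι → SpecialLinearGroup n A) where
  toFun X i := SpecialLinearGroup.map (Pi.evalRingHom (fun _ ↦ A) i) X
  invFun Y := ⟨of fun k l i ↦ Y i k l, funext fun i ↦
    ((Pi.evalRingHom (fun _ ↦ A) i).map_det _).trans (Y i).det_coe⟩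
  map_mul' X Y := funext fun i ↦ map_mul _ X Y

@[simp] lemma piEquiv_apply (X : SpecialLinearGroup n (ι → A)) (i : ι) (k l : n) :
    piEquiv X i k l = X k l i := rfl

@[simp] lemma piEquiv_symm_apply (Y : ι → SpecialLinearGroup n A) (k l : n) (i : ι) :
    piEquiv.symm Y k l i = Y i k l := rfl

lemma mem_congruenceSubgroup_pi_iff {q : ι → A} {X : SpecialLinearGroup n (ι → A)} :
    X ∈ Γ(n,q) ↔ ∀ i, piEquiv X i ∈ Γ(n,q i) := by
  simp only [mem_congruenceSubgroup_span_iff, pi_dvd_iff, Pi.sub_apply, piEquiv_apply, one_apply,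
    ite_apply, Pi.one_apply, Pi.zero_apply]
  exact ⟨fun h i k l ↦ h k l i, fun h k l i ↦ h i k l⟩

lemma isCoprime_pi_iff {x y : ι → A} : IsCoprime x y ↔ ∀ i, IsCoprime (x i) (y i) := by
  refine ⟨fun h i ↦ h.map (Pi.evalRingHom (fun _ ↦ A) i), fun h ↦ ?_⟩
  choose u v huv using h
  exact ⟨u, v, funext huv⟩

instance isBezout_pi [IsBezout A] : IsBezout (ι → A) := by
  refine IsBezout.iff_span_pair_isPrincipal.2 fun x y ↦ ?_
  choose d hd using fun i ↦ (IsBezout.span_pair_isPrincipal (x i) (y i)).principal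
  simp only [Ideal.submodule_span_eq] at hd
  have hx i : d i ∣ x i := Ideal.mem_span_singleton.1 (hd i ▸ Ideal.subset_span (by simp))
  have hy i : d i ∣ y i := Ideal.mem_span_singleton.1 (hd i ▸ Ideal.subset_span (by simp))
  choose u v huv using fun i ↦ Ideal.mem_span_pair.1 (hd i ▸ Ideal.mem_span_singleton_self (d i))
  refine ⟨d, le_antisymm (Ideal.span_le.2 ?_) ?_⟩
  · rintro z (rfl | rfl)
    · exact Ideal.mem_span_singleton.2 (pi_dvd_iff.2 hx)
    · exact Ideal.mem_span_singleton.2 (pi_dvd_iff.2 hy)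
  · exact (Ideal.span_singleton_le_iff_mem _).2 (Ideal.mem_span_pair.2 ⟨u, v, funext huv⟩)

/-- The matrix whose `i`-th component is the `k i`-th power of that of `X`. -/
def piPow (X : SpecialLinearGroup n (ι → A)) (k : ι → ℕ) : SpecialLinearGroup n (ι → A) :=
  piEquiv.symm fun i ↦ piEquiv X i ^ k i

lemma piPow_add (X : SpecialLinearGroup n (ι → A)) (k l : ι → ℕ) :
    piPow X (k + l) = piPow X k * piPow X l := by
  rw [piPow, piPow, piPow, ← map_mul]
  exact congrArg _ (funext fun i ↦ pow_add _ _ _)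

lemma piPow_const (X : SpecialLinearGroup n (ι → A)) (k : ℕ) : piPow X (fun _ ↦ k) = X ^ k :=
  (MulEquiv.symm_apply_eq _).2 (map_pow piEquiv X k).symm

lemma piPow_mem_congruenceSubgroup {q : ι → A} {X : SpecialLinearGroup n (ι → A)}
    (hX : X ∈ Γ(n,q)) (k : ι → ℕ) : piPow X k ∈ Γ(n,q) := by
  rw [mem_congruenceSubgroup_pi_iff] at hX ⊢
  intro i
  simpa [piPow] using pow_mem (hX i) (k i)

lemma exists_piPow_eq_smul_one_add_smul (X : SpecialLinearGroup (Fin 2) (ι → A)) (k : ι → ℕ) :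
    ∃ f g : ι → A, (piPow X k : Matrix (Fin 2) (Fin 2) (ι → A)) =
      f • (1 : Matrix (Fin 2) (Fin 2) (ι → A)) + g • (X : Matrix (Fin 2) (Fin 2) (ι → A)) := by
  choose f g h using fun i ↦ exists_pow_eq_smul_one_add_smul (piEquiv X i).1 (k i)
  refine ⟨f, g, ?_⟩
  ext a b i
  simpa [piPow, one_apply, ite_apply] using congrFun₂ (h i) a b

lemma apply_zero_one_dvd_piPow_sub_pow (X : SpecialLinearGroup (Fin 2) (ι → A)) (k : ι → ℕ) :
    X 0 1 ∣ piPow X k 0 0 - (fun i ↦ X 0 0 i ^ k i) :=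
  pi_dvd_iff.2 fun i ↦ apply_zero_one_dvd_pow_sub_pow (piEquiv X i).1 (k i)

lemma apply_one_zero_dvd_piPow_sub_pow (X : SpecialLinearGroup (Fin 2) (ι → A)) (k : ι → ℕ) :
    X 1 0 ∣ piPow X k 0 0 - (fun i ↦ X 0 0 i ^ k i) :=
  pi_dvd_iff.2 fun i ↦ apply_one_zero_dvd_pow_sub_pow (piEquiv X i).1 (k i)

end Pi

section StableRange

/-- Bass' stable range condition, in the weak form that unimodular rows of length three can be
shortened. -/
def StableRangeTwo (R : Type*) [CommRing R] : Prop :=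
  ∀ ⦃a b c x y z : R⦄, x * a + y * b + z * c = 1 → ∃ s t, IsCoprime (a + s * c) (b + t * c)

lemma exists_isCoprime_add_mul {A : Type*} [CommRing A] [IsDomain A] [IsPrincipalIdealRing A]
    {a b c : A} (hb : b ≠ 0) (h : ∀ p, Prime p → p ∣ a → p ∣ b → ¬ p ∣ c) :
    ∃ s, IsCoprime (a + s * c) b := by
  classical
  obtain ⟨F, hF, hu⟩ := UniqueFactorizationMonoid.exists_prime_factors b hb
  refine ⟨(F.filter (¬ · ∣ a)).prod, isCoprime_of_prime_dvd (fun h ↦ hb h.2) fun p hp hpa hpb ↦ ?_⟩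
  by_cases ha : p ∣ a
  · rcases hp.dvd_or_dvd ((dvd_add_right ha).1 hpa) with hpF | hpc
    · obtain ⟨r, hr, hpr⟩ := hp.exists_mem_multiset_dvd hpF
      rw [Multiset.mem_filter] at hr
      exact hr.2 ((hp.dvd_prime_iff_associated (hF r hr.1)).1 hpr |>.dvd' |>.trans ha)
    · exact h p hp ha hpb hpc
  · refine ha ((dvd_add_left (Dvd.dvd.mul_right ?_ c)).1 hpa)
    obtain ⟨r, hr, hpr⟩ := hp.exists_mem_multiset_dvd (hu.dvd_iff_dvd_right.2 hpb)
    exact hpr.trans (Multiset.dvd_prod (Multiset.mem_filter.2 ⟨hr, fun hra ↦ ha (hpr.trans hra)⟩))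

lemma stableRangeTwo_of_isPrincipalIdealRing {A : Type*} [CommRing A] [IsDomain A]
    [IsPrincipalIdealRing A] : StableRangeTwo A := by
  intro a b c x y z h
  obtain ⟨t, ht⟩ | hbc : (∃ t, b + t * c ≠ 0) ∨ b = 0 ∧ c = 0 := by
    by_contra! H
    have hb : b = 0 := by simpa using H.1 0
    exact H.2 hb (by simpa [hb] using H.1 1)
  · have coprime (p : A) (hp : Prime p) (hpa : p ∣ a) (hpb : p ∣ b + t * c) : ¬ p ∣ c := fun hpc ↦
      hp.not_dvd_one <| h ▸ dvd_add (dvd_add (hpa.mul_left x)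
        (((dvd_add_left (hpc.mul_left t)).1 hpb).mul_left y)) (hpc.mul_left z)
    obtain ⟨s, hs⟩ := exists_isCoprime_add_mul ht coprime
    exact ⟨s, t, hs⟩
  · exact ⟨0, 0, x, y, by simpa [hbc] using h⟩

lemma StableRangeTwo.pi {ι A : Type*} [CommRing A] (hA : StableRangeTwo A) :
    StableRangeTwo (ι → A) := by
  intro a b c x y z h
  choose s t hst using fun i ↦ hA (congrFun h i)
  exact ⟨s, t, isCoprime_pi_iff.2 hst⟩

end StableRange

section Reduction

variable {R : Type*} [CommRing R] {E : Subgroup (SpecialLinearGroup (Fin 3) R)} [E.Normal] {Q : R}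
  {g : SpecialLinearGroup (Fin 3) R}

lemma block₀₁_mem_congruenceSubgroup {X : SpecialLinearGroup (Fin 2) R} (hX : X ∈ Γ(Fin 2,Q)) :
    block₀₁ X ∈ Γ(Fin 3,Q) := by
  rw [mem_congruenceSubgroup_fin_two] at hX
  simpa [mem_congruenceSubgroup_span_iff, Fin.forall_fin_succ, coe_block₀₁, one_apply, and_assoc]
    using hX

lemma mem_of_row_eq_one (hE : ContainsElementary E Q)
    (hclass : ∀ X ∈ Γ(Fin 2,Q), blockClass E X = 1) (hg : g ∈ Γ(Fin 3,Q))
    (h₀ : g 0 0 = 1) (h₁ : g 0 1 = 0) (h₂ : g 0 2 = 0) : g ∈ E := by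
  have hdet := g.det_coe
  rw [det_fin_three, h₀, h₁, h₂] at hdet
  rw [mem_congruenceSubgroup_span_iff] at hg
  obtain ⟨Y, hY⟩ : ∃ Y : SpecialLinearGroup (Fin 2) R,
      (Y : Matrix (Fin 2) (Fin 2) R) = !![g 1 1, g 1 2; g 2 1, g 2 2] :=
    ⟨⟨_, by rw [det_fin_two_of]; linear_combination hdet⟩, rfl⟩
  have hYmem : Y ∈ Γ(Fin 2,Q) := mem_congruenceSubgroup_fin_two.2 <| by
    simpa [hY] using And.intro (hg 1 1) (And.intro (hg 1 2) (And.intro (hg 2 1) (hg 2 2)))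
  have factorization : g = elem 1 0 (g 1 0) * elem 2 0 (g 2 0) * block₁₂ Y := by
    ext k l
    fin_cases k <;> fin_cases l <;>
      simp [coe_block₁₂, hY, elem_apply, mul_apply, Fin.sum_univ_three, h₀, h₁, h₂, -cons_mul]
  rw [← QuotientGroup.eq_one_iff, factorization, QuotientGroup.mk_mul, QuotientGroup.mk_mul,
    hE.coe_elem_eq_one _ (by simpa using hg 1 0), hE.coe_elem_eq_one _ (by simpa using hg 2 0),
    coe_block₁₂_eq_blockClass hE hYmem, hclass Y hYmem, one_mul, one_mul]

lemma mem_of_isCoprime_of_eq_zero (hE : ContainsElementary E Q)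
    (hclass : ∀ X ∈ Γ(Fin 2,Q), blockClass E X = 1) (hg : g ∈ Γ(Fin 3,Q))
    (hcop : IsCoprime (g 0 0) (g 0 1)) (h₂ : g 0 2 = 0) : g ∈ E := by
  have hg' := mem_congruenceSubgroup_span_iff.1 hg
  obtain ⟨X, hX, hX₀, hX₁⟩ := IsMennickePair.exists_mem (Q := Q)
    ⟨by simpa using hg' 0 0, by simpa using hg' 0 1, hcop⟩
  have hXdet := det_fin_two_eq_one X
  have hXE : block₀₁ X⁻¹ ∈ E := (QuotientGroup.eq_one_iff _).1 (hclass _ (inv_mem hX))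
  refine (Subgroup.mul_mem_cancel_right E hXE).1 (mem_of_row_eq_one hE hclass
    (mul_mem hg (block₀₁_mem_congruenceSubgroup (inv_mem hX))) ?_ ?_ ?_) <;>
  simp [coe_block₀₁, mul_apply, Fin.sum_univ_three, adjugate_fin_two, ← hX₀, ← hX₁, h₂]
  · linear_combination hXdet
  · ring

lemma mem_of_isCoprime (hE : ContainsElementary E Q)
    (hclass : ∀ X ∈ Γ(Fin 2,Q), blockClass E X = 1) (hg : g ∈ Γ(Fin 3,Q))
    (hcop : IsCoprime (g 0 0) (g 0 1)) : g ∈ E := by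
  obtain ⟨x, y, hxy⟩ := id hcop
  have hQ (t : R) : Q ∣ t * g 0 2 :=
    (by simpa using mem_congruenceSubgroup_span_iff.1 hg 0 2 : Q ∣ g 0 2).mul_left t
  have hcE : elem 0 2 (-x * g 0 2) * elem 1 2 (-y * g 0 2) ∈ E :=
    mul_mem (hE _ (hQ _)) (hE _ (hQ _))
  have hcmem : elem 0 2 (-x * g 0 2) * elem 1 2 (-y * g 0 2) ∈ Γ(Fin 3,Q) :=
    mul_mem (elem_mem_congruenceSubgroup _ (hQ _)) (elem_mem_congruenceSubgroup _ (hQ _))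
  refine (Subgroup.mul_mem_cancel_right E hcE).1
    (mem_of_isCoprime_of_eq_zero hE hclass (mul_mem hg hcmem) ?_ ?_)
  · simpa [elem_apply, mul_apply, Fin.sum_univ_three] using hcop
  · simp [elem_apply, mul_apply, Fin.sum_univ_three]
    linear_combination -g 0 2 * hxy

theorem congruenceSubgroup_le_of_blockClass_eq_one (hR : StableRangeTwo R)
    (hE : ContainsElementary E Q) (hclass : ∀ X ∈ Γ(Fin 2,Q), blockClass E X = 1) :
    Γ(Fin 3,Q) ≤ E := by
  intro g hg
  have unimodular : g⁻¹ 0 0 * g 0 0 + g⁻¹ 1 0 * g 0 1 + g⁻¹ 2 0 * g 0 2 = 1 := by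
    have := congrArg (fun M : SpecialLinearGroup (Fin 3) R ↦ M 0 0) (mul_inv_cancel g)
    simpa only [coe_mul, mul_apply, Fin.sum_univ_three, coe_one, one_apply_eq, mul_comm (g _ _)]
      using this
  obtain ⟨s, t, hst⟩ := hR unimodular
  set c : SpecialLinearGroup (Fin 3) R := elem 2 0 s * elem 2 1 t with hc
  have hcinv : c⁻¹ = elem 2 1 (-t) * elem 2 0 (-s) := by
    rw [hc, _root_.mul_inv_rev, transvection_inv, transvection_inv]
  have h₀ : (c⁻¹ * g * c) 0 0 = g 0 0 + s * g 0 2 := by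
    rw [hcinv, hc]
    simp [elem_apply, mul_apply, Fin.sum_univ_three]
    ring
  have h₁ : (c⁻¹ * g * c) 0 1 = g 0 1 + t * g 0 2 := by
    rw [hcinv, hc]
    simp [elem_apply, mul_apply, Fin.sum_univ_three]
    ring
  have hmem : c⁻¹ * g * c ∈ E := mem_of_isCoprime hE hclass
    (by simpa using (congruenceSubgroup_normal _).conj_mem g hg c⁻¹) (by rwa [h₀, h₁])
  simpa [mul_assoc] using (inferInstance : E.Normal).conj_mem _ hmem c

end Reduction

section PrimesModulo

lemma exists_prime_gt_and_eq_mod_and_eq_mod {m n : ℕ} [NeZero m] [NeZero n] (hmn : m.Coprime n)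
    {x : ZMod m} {y : ZMod n} (hx : IsUnit x) (hy : IsUnit y) (B : ℕ) :
    ∃ p > B, p.Prime ∧ (p : ZMod m) = x ∧ (p : ZMod n) = y := by
  let e := ZMod.chineseRemainder hmn
  have hxy : IsUnit (e.symm (x, y)) := (Prod.isUnit_iff.2 ⟨hx, hy⟩).map e.symm
  obtain ⟨p, hB, hp, hpxy⟩ := Nat.forall_exists_prime_gt_and_eq_mod hxy B
  have : ((p : ZMod m), (p : ZMod n)) = (x, y) := by
    rw [← e.apply_symm_apply (x, y), ← hpxy, map_natCast]
    rfl
  exact ⟨p, hB, hp, congrArg Prod.fst this, congrArg Prod.snd this⟩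

lemma exists_primes_gt_and_eq_mod {p : ℕ} (hp : p.Prime) (hp2 : p ≠ 2) {x : ZMod p} (hx : x ≠ 0)
    (B : ℕ) : ∃ (u : ℤˣ) (p₁ p₂ : ℕ), p₁.Prime ∧ p₂.Prime ∧ B < p₁ ∧ B < p₂ ∧
      (p₁ : ZMod p) = u * x ∧ (p₂ : ZMod p) = u * x ∧ p₁ - 1 ∣ p₂ - 1 + 2 := by
  have := Fact.mk hp
  obtain ⟨u, hu⟩ : ∃ u : ℤˣ, (u * x : ZMod p) ≠ 1 := by
    by_contra! h
    have h₁ : x = 1 := by simpa using h 1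
    have h₂ : (-1 : ZMod p) = 1 := by simpa [h₁] using h (-1)
    have := Fact.mk (lt_of_le_of_ne hp.two_le hp2.symm)
    exact ZMod.neg_one_ne_one h₂
  have hux : IsUnit (u * x : ZMod p) := (u.isUnit.map (Int.castRingHom (ZMod p))).mul hx.isUnit
  obtain ⟨p₁, hB₁, hp₁, hp₁x⟩ := Nat.forall_exists_prime_gt_and_eq_mod hux B
  have hcop : p.Coprime (p₁ - 1) := (Nat.Prime.coprime_iff_not_dvd hp).2 fun h ↦ hu <| by
    rw [← ZMod.natCast_eq_zero_iff, Nat.cast_sub hp₁.one_le, hp₁x, Nat.cast_one] at h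
    exact sub_eq_zero.1 h
  have : NeZero (p₁ - 1) := ⟨(Nat.sub_pos_of_lt hp₁.one_lt).ne'⟩
  obtain ⟨p₂, hB₂, hp₂, hp₂x, hp₂'⟩ :=
    exists_prime_gt_and_eq_mod_and_eq_mod hcop hux (isUnit_neg_one (α := ZMod (p₁ - 1))) B
  refine ⟨u, p₁, p₂, hp₁, hp₂, hB₁, hB₂, hp₁x, hp₂x, ?_⟩
  have := hp₂.one_le
  rw [show p₂ - 1 + 2 = p₂ + 1 by lia, ← ZMod.natCast_eq_zero_iff, Nat.cast_add, hp₂', Nat.cast_one,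
    neg_add_cancel]

lemma exists_eq_unit_mul_pow_four {p : ℕ} (hp : p.Prime) (h3 : p % 4 = 3) {x : ZMod p}
    (hx : x ≠ 0) : ∃ (u : ℤˣ) (k : ℕ), x = u * (x ^ k) ^ 4 := by
  have := Fact.mk hp
  obtain ⟨j, rfl⟩ : ∃ j, p = 4 * j + 3 := ⟨p / 4, by lia⟩
  obtain ⟨u, hu⟩ : ∃ u : ℤˣ, x ^ (2 * j + 1) = u := by
    have := ZMod.pow_div_two_eq_neg_one_or_one _ hx
    rw [show (4 * j + 3) / 2 = 2 * j + 1 by lia] at this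
    rcases this with h | h
    · exact ⟨1, by simpa using h⟩
    · exact ⟨-1, by simpa using h⟩
  have hu2 : (u : ZMod (4 * j + 3)) ^ 2 = 1 := by
    rcases Int.units_eq_one_or u with rfl | rfl <;> simp
  refine ⟨u, (j + 1) ^ 2, ?_⟩
  calc x = u ^ 2 * (u ^ 2) ^ (j + 1) * x := by simp [hu2]
    _ = u * (x ^ (2 * j + 1)) ^ (2 * j + 3) * x := by rw [hu]; ring
    _ = u * (x ^ (j + 1) ^ 2) ^ 4 := by ring

end PrimesModulo

section Zhalf

lemma isUnit_two : IsUnit (2 : Zhalf) :=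
  IsUnit.of_mul_eq_one ⟨2⁻¹, Subring.subset_closure rfl⟩
    (Subtype.ext (mul_inv_cancel₀ two_ne_zero : (2 : ℚ) * 2⁻¹ = 1))

lemma exists_mul_two_pow_eq_intCast (x : Zhalf) : ∃ (k : ℕ) (n : ℤ), x * 2 ^ k = n := by
  suffices ∀ y ∈ Zhalf, ∃ (k : ℕ) (n : ℤ), y * 2 ^ k = n by
    obtain ⟨k, n, h⟩ := this x x.2
    exact ⟨k, n, Subtype.ext (by push_cast; exact h)⟩
  intro y hy
  induction hy using Subring.closure_induction with
  | mem y hy => exact ⟨1, 1, by simp [Set.mem_singleton_iff.1 hy]⟩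
  | zero => exact ⟨0, 0, by simp⟩
  | one => exact ⟨0, 1, by simp⟩
  | add y z _ _ hy hz =>
    obtain ⟨⟨k, n, hy⟩, l, m, hz⟩ := hy, hz
    exact ⟨k + l, n * 2 ^ l + m * 2 ^ k, by push_cast; rw [← hy, ← hz]; ring⟩
  | neg y _ hy =>
    obtain ⟨k, n, hy⟩ := hy
    exact ⟨k, -n, by push_cast; rw [← hy]; ring⟩
  | mul y z _ _ hy hz =>
    obtain ⟨⟨k, n, hy⟩, l, m, hz⟩ := hy, hz
    exact ⟨k + l, n * m, by push_cast; rw [← hy, ← hz]; ring⟩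

instance isLocalization_away_two : IsLocalization.Away (2 : ℤ) Zhalf where
  map_units := by
    rintro ⟨_, k, rfl⟩
    simpa using isUnit_two.pow k
  surj x := by
    obtain ⟨k, n, h⟩ := exists_mul_two_pow_eq_intCast x
    exact ⟨(n, ⟨2 ^ k, k, rfl⟩), by simpa using h⟩
  exists_of_eq h := ⟨1, by simpa using h⟩

instance isPrincipalIdealRing_zhalf : IsPrincipalIdealRing Zhalf where
  principal I := by
    obtain ⟨n, hn⟩ := IsPrincipalIdealRing.principal (I.under ℤ)
    refine ⟨n, ?_⟩
    rw [← IsLocalization.map_under (.powers (2 : ℤ)) Zhalf I, hn, Ideal.submodule_span_eq,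
      Ideal.submodule_span_eq, Ideal.map_span, Set.image_singleton, eq_intCast]

lemma exists_residue_hom {m : ℕ} (hm : Odd m) :
    ∃ f : Zhalf →+* ZMod m, ∀ x, f x = 0 ↔ (m : Zhalf) ∣ x := by
  have h2 : IsUnit (Int.castRingHom (ZMod m) 2) := by
    simpa using (ZMod.isUnit_iff_coprime 2 m).2 hm.coprime_two_left
  let f : Zhalf →+* ZMod m := IsLocalization.Away.lift (2 : ℤ) h2
  refine ⟨f, fun x ↦ ⟨fun hx ↦ ?_, fun ⟨y, hy⟩ ↦ by simp [hy]⟩⟩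
  obtain ⟨k, n, h⟩ := exists_mul_two_pow_eq_intCast x
  have hn : (m : ℤ) ∣ n := by
    rw [← ZMod.intCast_zmod_eq_zero_iff_dvd, ← map_intCast f, ← h, map_mul, hx, zero_mul]
  rw [← (isUnit_two.pow k).dvd_mul_right, h]
  exact_mod_cast map_dvd (Int.castRingHom Zhalf) hn

lemma isUnit_residue {m : ℕ} {f : Zhalf →+* ZMod m} {x : Zhalf} (hx : IsCoprime (m : Zhalf) x) :
    IsUnit (f x) := by
  simpa [isCoprime_zero_left] using hx.map f

lemma exists_odd_associated {x : Zhalf} (hx : x ≠ 0) :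
    ∃ m : ℕ, Odd m ∧ Associated x (m : Zhalf) := by
  obtain ⟨k, n, h⟩ := exists_mul_two_pow_eq_intCast x
  have hn : n.natAbs ≠ 0 := by
    rintro hn
    rw [Int.natAbs_eq_zero.1 hn, Int.cast_zero, (isUnit_two.pow k).mul_left_eq_zero] at h
    exact hx h
  obtain ⟨j, m, hm, hj⟩ := Nat.exists_eq_two_pow_mul_odd hn
  refine ⟨m, hm, ?_⟩
  have hxn : Associated x (n : Zhalf) := h ▸ (associated_mul_unit_right x _ (isUnit_two.pow k))
  have hnj : Associated (n : Zhalf) (2 ^ j * m : Zhalf) := by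
    have := (Int.associated_natAbs n).map (Int.castRingHom Zhalf)
    simpa [hj] using this
  exact hxn.trans (hnj.trans (associated_unit_mul_left _ _ (isUnit_two.pow j)))

lemma exists_prime_mod_four_eq_three_and_dvd {a b : Zhalf} (h : IsCoprime a b) (hb : b ≠ 0) :
    ∃ p : ℕ, p.Prime ∧ p % 4 = 3 ∧ b ∣ p - a := by
  obtain ⟨m, hm, hbm⟩ := exists_odd_associated hb
  obtain ⟨f, hf⟩ := exists_residue_hom hm
  have : NeZero m := ⟨hm.pos.ne'⟩
  have hfa : IsUnit (f a) := isUnit_residue (h.symm.of_isCoprime_of_dvd_left hbm.dvd')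
  have h3 : IsUnit (3 : ZMod 4) := by decide
  obtain ⟨p, -, hp, hpa, hp3⟩ := exists_prime_gt_and_eq_mod_and_eq_mod
    (hm.coprime_two_right.pow_right 2) hfa h3 0
  refine ⟨p, hp, (ZMod.natCast_eq_natCast_iff' p 3 4).1 hp3, hbm.dvd.trans ((hf _).1 ?_)⟩
  rw [map_sub, map_natCast, hpa, sub_self]

lemma exists_dvd_sub_unit_mul_pow_four {p : ℕ} (hp : p.Prime) (h3 : p % 4 = 3) {x : Zhalf}
    (hx : IsCoprime (p : Zhalf) x) :
    ∃ (u : ℤˣ) (y : Zhalf), IsCoprime (p : Zhalf) y ∧ (p : Zhalf) ∣ x - u * y ^ 4 := by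
  have := Fact.mk hp
  obtain ⟨f, hf⟩ := exists_residue_hom (hp.odd_of_ne_two (by lia))
  obtain ⟨u, k, hu⟩ := exists_eq_unit_mul_pow_four hp h3 (isUnit_residue (f := f) hx).ne_zero
  refine ⟨u, x ^ k, hx.pow_right, (hf _).1 ?_⟩
  simpa [sub_eq_zero] using hu

lemma exists_primes_gt_and_dvd_sub {p : ℕ} (hp : p.Prime) (hp2 : p ≠ 2) {x : Zhalf}
    (hx : IsCoprime (p : Zhalf) x) (B : ℕ) :
    ∃ (u : ℤˣ) (p₁ p₂ : ℕ), p₁.Prime ∧ p₂.Prime ∧ B < p₁ ∧ B < p₂ ∧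
      (p : Zhalf) ∣ p₁ - u * x ∧ (p : Zhalf) ∣ p₂ - u * x ∧ p₁ - 1 ∣ p₂ - 1 + 2 := by
  have := Fact.mk hp
  obtain ⟨f, hf⟩ := exists_residue_hom (hp.odd_of_ne_two hp2)
  obtain ⟨u, p₁, p₂, hp₁, hp₂, hB₁, hB₂, h₁, h₂, hdvd⟩ :=
    exists_primes_gt_and_eq_mod hp hp2 (isUnit_residue (f := f) hx).ne_zero B
  exact ⟨u, p₁, p₂, hp₁, hp₂, hB₁, hB₂, (hf _).1 (by simp [h₁]), (hf _).1 (by simp [h₂]), hdvd⟩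

lemma prime_dvd_pow_sub_one {p : ℕ} (hp : p.Prime) (hp2 : p ≠ 2) {x : Zhalf}
    (hx : IsCoprime (p : Zhalf) x) {k : ℕ} (hk : p - 1 ∣ k) : (p : Zhalf) ∣ x ^ k - 1 := by
  have := Fact.mk hp
  obtain ⟨f, hf⟩ := exists_residue_hom (hp.odd_of_ne_two hp2)
  obtain ⟨l, rfl⟩ := hk
  rw [← hf, map_sub, map_pow, pow_mul, ZMod.pow_card_sub_one_eq_one (isUnit_residue hx).ne_zero,
    one_pow, map_one, sub_self]

lemma exists_forall_prime_gt_isCoprime {q : Zhalf} (hq : q ≠ 0) :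
    ∃ B : ℕ, ∀ p : ℕ, p.Prime → B < p → IsCoprime q (p : Zhalf) := by
  obtain ⟨m, hm, hqm⟩ := exists_odd_associated hq
  refine ⟨m, fun p hp hmp ↦ IsCoprime.of_isCoprime_of_dvd_left ?_ hqm.dvd⟩
  have hcop : m.Coprime p := (Nat.coprime_of_lt_prime hm.pos.ne' hmp hp).symm
  exact_mod_cast (Nat.isCoprime_iff_coprime.2 hcop).map (Int.castRingHom Zhalf)

end Zhalf

section PowersOfRings

variable {ι A : Type*} [CommRing A] {E : Subgroup (SpecialLinearGroup (Fin 3) (ι → A))} [E.Normal]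
  {Q a b t : ι → A} {X Y : SpecialLinearGroup (Fin 2) (ι → A)}
  (hE : ContainsElementary E Q)
include hE

lemma blockClass_piPow_sq_eq_one (hX : X ∈ Γ(Fin 2,Q)) {k : ι → ℕ}
    (h : X 0 1 ∣ (fun i ↦ X 0 0 i ^ k i) - 1) : blockClass E (piPow X k) ^ 2 = 1 := by
  obtain ⟨f, g, hfg⟩ := exists_piPow_eq_smul_one_add_smul X k
  have h1 : X 0 1 ∣ piPow X k 0 0 - 1 := by
    simpa using dvd_add (apply_zero_one_dvd_piPow_sub_pow X k) h
  rw [blockClass_sq_eq_mennickeSymbol_sq hE hX (piPow_mem_congruenceSubgroup hX k) hfg h1,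
    mennickeSymbol_one_left hE (mem_congruenceSubgroup_fin_two.1 hX).2.1, one_pow]

lemma blockClass_piPow_sq_eq_of_col_eq (hX : X ∈ Γ(Fin 2,Q)) (hY : Y ∈ Γ(Fin 2,Q))
    (h₀ : X 0 0 = Y 0 0) (h₁ : X 1 0 = Y 1 0) (k : ι → ℕ) :
    blockClass E (piPow X k) ^ 2 = blockClass E (piPow Y k) ^ 2 := by
  obtain ⟨f, g, hfg⟩ := exists_piPow_eq_smul_one_add_smul X k
  obtain ⟨f', g', hfg'⟩ := exists_piPow_eq_smul_one_add_smul Y k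
  rw [blockClass_sq_eq_inv_mennickeSymbol_sq hE hX (piPow_mem_congruenceSubgroup hX k) hfg
      (apply_one_zero_dvd_piPow_sub_pow X k),
    blockClass_sq_eq_inv_mennickeSymbol_sq hE hY (piPow_mem_congruenceSubgroup hY k) hfg'
      (apply_one_zero_dvd_piPow_sub_pow Y k), h₀, h₁]

/- With `X` a matrix with first row `(a, b)` and `Y` its translate with first row `(a, b + t * a)`,
the squares of the classes of `X ^ (k + 2)` and of `Y ^ k` are trivial. The latter equals the square
of the class of `X ^ k`, because `X` and `Y` have the same first column. -/
lemma mennickeSymbol_pow_four_eq_one (h : IsMennickePair Q a b) (ht : Q ∣ t) {k : ι → ℕ}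
    (hb : b ∣ (fun i ↦ a i ^ (k i + 2)) - 1) (hbt : b + t * a ∣ (fun i ↦ a i ^ k i) - 1) :
    mennickeSymbol E Q a b ^ 4 = 1 := by
  obtain ⟨X, hX, rfl, rfl⟩ := h.exists_mem
  have h01 : (0 : Fin 2) ≠ 1 := by decide
  have hY := mul_mem hX (elem_mem_congruenceSubgroup h01 ht)
  have hX2 : blockClass E (piPow X (k + fun _ ↦ 2)) ^ 2 = 1 := blockClass_piPow_sq_eq_one hE hX hb
  have hYk : blockClass E (piPow (X * elem 0 1 t) k) ^ 2 = 1 :=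
    blockClass_piPow_sq_eq_one hE hY <| by
      simpa [elem_apply, mul_apply, add_comm, mul_comm t] using hbt
  have hXk : blockClass E (piPow X k) ^ 2 = 1 := by
    rwa [blockClass_piPow_sq_eq_of_col_eq hE hX hY (by simp [elem_apply, mul_apply])
      (by simp [elem_apply, mul_apply])]
  have hcomm : Commute (piPow X k) (X ^ 2) := by
    rw [← piPow_const, commute_iff_eq, ← piPow_add, ← piPow_add, add_comm]
  rw [piPow_add, piPow_const, map_mul, (hcomm.map (blockClass E)).mul_pow, hXk, one_mul, map_pow,
    ← pow_mul, blockClass_eq_mennickeSymbol hE hX] at hX2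
  exact hX2

end PowersOfRings

section PowersOfZhalf

variable {ι : Type*} {E : Subgroup (SpecialLinearGroup (Fin 3) (ι → Zhalf))} [E.Normal]
  {Q a b : ι → Zhalf}

lemma exists_primes_mul_dvd_pow_sub_one {q x : Zhalf} {p : ℕ} (hp : p.Prime) (hp2 : p ≠ 2)
    (hq : q ≠ 0) (hqp : q ∣ p - 1) (hx : IsCoprime (p : Zhalf) x) :
    ∃ (u : ℤˣ) (p₁ p₂ : Zhalf) (k : ℕ), IsCoprime (p : Zhalf) p₁ ∧ (p : Zhalf) ∣ p₁ - u * x ∧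
      (p : Zhalf) ∣ p₂ - p₁ ∧ q * p₁ ∣ p ^ (k + 2) - 1 ∧ q * p₂ ∣ p ^ k - 1 := by
  obtain ⟨B, hB⟩ := exists_forall_prime_gt_isCoprime hq
  obtain ⟨u, p₁, p₂, hp₁, hp₂, hB₁, hB₂, h₁, h₂, hdvd⟩ :=
    exists_primes_gt_and_dvd_sub hp hp2 hx (max (max B p) 2)
  simp only [max_lt_iff] at hB₁ hB₂
  have coprime {r : ℕ} (hr : r.Prime) (hpr : p < r) : IsCoprime (p : Zhalf) r := by
    exact_mod_cast (Nat.isCoprime_iff_coprime.2 ((Nat.coprime_primes hp hr).2 hpr.ne)).map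
      (Int.castRingHom Zhalf)
  have dvd {r k : ℕ} (hr : r.Prime) (hBr : (B < r ∧ p < r) ∧ 2 < r) (hk : r - 1 ∣ k) :
      q * r ∣ (p : Zhalf) ^ k - 1 :=
    (hB r hr hBr.1.1).mul_dvd (hqp.trans (sub_one_dvd_pow_sub_one _ _))
      (prime_dvd_pow_sub_one hr hBr.2.ne' (coprime hr hBr.1.2).symm hk)
  exact ⟨u, p₁, p₂, p₂ - 1, coprime hp₁ hB₁.1.2, h₁, by simpa using dvd_sub h₂ h₁,
    dvd hp₁ hB₁ hdvd, dvd hp₂ hB₂ dvd_rfl⟩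

lemma mennickeSymbol_level_mul_pow_four_eq_one (hE : ContainsElementary E Q) (hQ : ∀ i, Q i ≠ 0)
    {p : ι → ℕ} (hp : ∀ i, (p i).Prime) (hp2 : ∀ i, p i ≠ 2) {x : ι → Zhalf}
    (hQp : Q ∣ (fun i ↦ (p i : Zhalf)) - 1) (hx : IsCoprime (fun i ↦ (p i : Zhalf)) x) :
    mennickeSymbol E Q (fun i ↦ p i) (Q * x) ^ 4 = 1 := by
  set P : ι → Zhalf := fun i ↦ p i
  choose u p₁ p₂ k hcop h₁ h₂ hk₁ hk₂ using fun i ↦ exists_primes_mul_dvd_pow_sub_one (hp i)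
    (hp2 i) (hQ i) (pi_dvd_iff.1 hQp i) (isCoprime_pi_iff.1 hx i)
  obtain ⟨v, hv⟩ : P ∣ p₁ - (fun i ↦ (u i : Zhalf)) * x := pi_dvd_iff.2 h₁
  obtain ⟨w, hw⟩ : P ∣ p₂ - p₁ := pi_dvd_iff.2 h₂
  have hu : IsUnit (fun i ↦ (u i : Zhalf)) :=
    Pi.isUnit_iff.2 fun i ↦ (u i).isUnit.map (Int.castRingHom Zhalf)
  have hpair := isMennickePair_mul_level hQp (isCoprime_pi_iff.2 hcop)
  have hshift : (fun i ↦ (u i : Zhalf)) * (Q * x) = Q * p₁ + -(Q * v) * P := by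
    linear_combination -Q * hv
  rw [← mennickeSymbol_unit_mul hE (isMennickePair_mul_level hQp hx) hu, hshift,
    mennickeSymbol_add_mul_right hE hpair (dvd_neg.2 (dvd_mul_right Q v))]
  refine mennickeSymbol_pow_four_eq_one hE hpair (dvd_mul_right Q w) (pi_dvd_iff.2 hk₁) ?_
  have : Q * p₁ + Q * w * P = Q * p₂ := by linear_combination -Q * hw
  rw [this]
  exact pi_dvd_iff.2 hk₂

lemma exists_add_mul_ne_zero {q a b : Zhalf} (hq : q ≠ 0) (h : IsCoprime a b) :
    ∃ t, q ∣ t ∧ b + t * a ≠ 0 := by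
  by_cases hb : b = 0
  · have ha : a ≠ 0 := by
      rintro rfl
      exact not_isCoprime_zero_zero (hb ▸ h)
    exact ⟨q, dvd_rfl, by simp [hb, hq, ha]⟩
  · exact ⟨0, dvd_zero q, by simpa using hb⟩

theorem mennickeSymbol_eq_one (hE : ContainsElementary E Q) (hQ : ∀ i, Q i ≠ 0)
    (h : IsMennickePair Q a b) : mennickeSymbol E Q a b = 1 := by
  choose t ht hbt using fun i ↦ exists_add_mul_ne_zero (hQ i) (isCoprime_pi_iff.1 h.isCoprime i)
  replace ht : Q ∣ t := pi_dvd_iff.2 ht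
  have h' := h.add_mul_right ht
  choose p hp hp3 hpa using fun i ↦
    exists_prime_mod_four_eq_three_and_dvd (isCoprime_pi_iff.1 h'.isCoprime i) (hbt i)
  obtain ⟨s, hs⟩ : b + t * a ∣ (fun i ↦ (p i : Zhalf)) - a := pi_dvd_iff.2 hpa
  obtain ⟨x, hx⟩ := h'.dvd
  have hP : (fun i ↦ (p i : Zhalf)) = a + s * (b + t * a) := by linear_combination hs
  have hPpair : IsMennickePair Q (fun i ↦ (p i : Zhalf)) (Q * x) := by
    rw [hP, ← hx]
    exact h'.add_mul_left s
  choose u y hy hxy using fun i ↦ exists_dvd_sub_unit_mul_pow_four (hp i) (hp3 i)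
    (isCoprime_pi_iff.1 hPpair.isCoprime.of_mul_right_right i)
  obtain ⟨v, hv⟩ : (fun i ↦ (p i : Zhalf)) ∣ x - (fun i ↦ (u i : Zhalf)) * y ^ 4 :=
    pi_dvd_iff.2 hxy
  have hu : IsUnit (fun i ↦ (u i : Zhalf)) :=
    Pi.isUnit_iff.2 fun i ↦ (u i).isUnit.map (Int.castRingHom Zhalf)
  have hycop : IsCoprime (fun i ↦ (p i : Zhalf)) y := isCoprime_pi_iff.2 hy
  have hypair := isMennickePair_mul_level hPpair.dvd_sub_one (hycop.pow_right (n := 4))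
  have hshift : (fun i ↦ (u i : Zhalf)) * (Q * y ^ 4) =
      Q * x + -(Q * v) * fun i ↦ (p i : Zhalf) := by
    linear_combination -Q * hv
  calc mennickeSymbol E Q a b
    _ = mennickeSymbol E Q (fun i ↦ p i) (Q * x) := by
      rw [← mennickeSymbol_add_mul_right hE h ht, ← mennickeSymbol_add_mul_left hE h' s, ← hP, hx]
    _ = mennickeSymbol E Q (fun i ↦ p i) (Q * y ^ 4) := by
      rw [← mennickeSymbol_unit_mul hE hypair hu, hshift,
        mennickeSymbol_add_mul_right hE hPpair (dvd_neg.2 (dvd_mul_right Q v))]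
    _ = mennickeSymbol E Q (fun i ↦ p i) (Q * y) ^ 4 :=
      mennickeSymbol_level_mul_pow hE hPpair.dvd_sub_one hycop 4
    _ = 1 := mennickeSymbol_level_mul_pow_four_eq_one hE hQ hp (fun i hi ↦ by grind)
      hPpair.dvd_sub_one hycop

theorem congruenceSubgroup_le_of_containsElementary (hE : ContainsElementary E Q)
    (hQ : ∀ i, Q i ≠ 0) : Γ(Fin 3,Q) ≤ E :=
  congruenceSubgroup_le_of_blockClass_eq_one stableRangeTwo_of_isPrincipalIdealRing.pi hE
    fun _ hX ↦ (blockClass_eq_mennickeSymbol hE hX).trans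
      (mennickeSymbol_eq_one hE hQ (isMennickePair_of_mem hX))

end PowersOfZhalf

section Commutator

variable {n ι A : Type*} [Fintype n] [DecidableEq n] [CommRing A]

/-- The endomorphism of `SLₙ(ι → A)` replacing the components outside `s` by the identity. -/
noncomputable def mulIndicatorHom (s : Set ι) :
    SpecialLinearGroup n (ι → A) →* SpecialLinearGroup n (ι → A) :=
  piEquiv.symm.toMonoidHom.comp ((Set.mulIndicatorHom _ s).comp piEquiv.toMonoidHom)

lemma piEquiv_mulIndicatorHom (s : Set ι) (X : SpecialLinearGroup n (ι → A)) :
    piEquiv (mulIndicatorHom s X) = s.mulIndicator (piEquiv X) :=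
  piEquiv.apply_symm_apply _

lemma map_mulIndicatorHom_le {s : Set ι} {q q' : ι → A} (h : ∀ i ∈ s, q' i = q i) :
    (Γ(n,q')).map (mulIndicatorHom s) ≤ Γ(n,q) := by
  rintro _ ⟨X, hX, rfl⟩
  refine mem_congruenceSubgroup_pi_iff.2 fun i ↦ ?_
  rw [piEquiv_mulIndicatorHom]
  by_cases hi : i ∈ s
  · simpa [hi, h i hi] using mem_congruenceSubgroup_pi_iff.1 hX i
  · simp [hi, one_mem]

lemma mulIndicatorHom_eq_self {s : Set ι} {q : ι → A} (hq : Function.support q ⊆ s)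
    {X : SpecialLinearGroup n (ι → A)} (hX : X ∈ Γ(n,q)) : mulIndicatorHom s X = X := by
  refine piEquiv.injective ((piEquiv_mulIndicatorHom s X).trans (Set.mulIndicator_eq_self.2 ?_))
  refine fun i hi ↦ hq fun hqi ↦ hi ?_
  ext k l
  have := mem_congruenceSubgroup_span_iff.1 (mem_congruenceSubgroup_pi_iff.1 hX i) k l
  rw [hqi, zero_dvd_iff, sub_eq_zero] at this
  exact this

theorem congruenceSubgroup_sq_le_commutator_pi (q : ι → Zhalf) :
    Γ(Fin 3,q ^ 2) ≤ ⁅Γ(Fin 3,q), Γ(Fin 3,q)⁆ := by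
  classical
  let q' : ι → Zhalf := fun i ↦ if q i = 0 then 1 else q i
  have hq'0 (i : ι) : (q' ^ 2) i ≠ 0 := by by_cases h : q i = 0 <;> simp [q', h]
  have hq' : q' ∣ q := pi_dvd_iff.2 fun i ↦ by by_cases h : q i = 0 <;> simp [q', h]
  have hmap : (Γ(Fin 3,q')).map (mulIndicatorHom (Function.support q)) ≤ Γ(Fin 3,q) :=
    map_mulIndicatorHom_le fun i hi ↦ if_neg hi
  intro X hX
  have hX' : X ∈ ⁅Γ(Fin 3,q'), Γ(Fin 3,q')⁆ :=
    congruenceSubgroup_le_of_containsElementary (containsElementary_commutator q') hq'0 <|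
      congruenceSubgroup_mono
        (Ideal.span_singleton_le_span_singleton.2 (pow_dvd_pow_of_dvd hq' 2)) hX
  have hfix : mulIndicatorHom (Function.support q) X = X :=
    mulIndicatorHom_eq_self ((Function.support_pow' q two_ne_zero).le) hX
  have := Subgroup.mem_map_of_mem (mulIndicatorHom (Function.support q)) hX'
  rw [Subgroup.map_commutator, hfix] at this
  exact Subgroup.commutator_mono hmap hmap this

lemma exists_mem_congruenceSubgroup_pi_eq {q : ι → A} {M : Matrix n n (ι → A)}
    (hM : ∀ k l, q ∣ M k l - (1 : Matrix n n (ι → A)) k l) :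
    ∃ X ∈ Γ(n,q), ∀ i, M.det i = 1 → ∀ k l, X k l i = M k l i := by
  have key (i : ι) : ∃ Y ∈ Γ(n,q i), M.det i = 1 → ∀ k l, Y k l = M k l i := by
    by_cases h : M.det i = 1
    · refine ⟨⟨(Pi.evalRingHom (fun _ ↦ A) i).mapMatrix M, ?_⟩, ?_, fun _ _ _ ↦ rfl⟩
      · rw [← RingHom.map_det]
        exact h
      · refine mem_congruenceSubgroup_span_iff.2 fun k l ↦ ?_
        simpa [one_apply, ite_apply] using pi_dvd_iff.1 (hM k l) i
    · exact ⟨1, one_mem _, fun h' ↦ absurd h' h⟩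
  choose Y hY hYM using key
  exact ⟨piEquiv.symm Y, mem_congruenceSubgroup_pi_iff.2 fun i ↦ by simpa using hY i, hYM⟩

lemma exists_map_coeRingHom_eq {l : Filter ι} {q : ι → A} {g : SpecialLinearGroup n (l.Germ A)}
    (hg : g ∈ Γ(n,Filter.Germ.coeRingHom l q)) :
    ∃ X ∈ Γ(n,q), SpecialLinearGroup.map (Filter.Germ.coeRingHom l) X = g := by
  let φ : (ι → A) →+* l.Germ A := Filter.Germ.coeRingHom l
  choose w hw using mem_congruenceSubgroup_span_iff.1 hg
  choose z hz using fun i j ↦ Quot.mk_surjective (w i j)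
  let M : Matrix n n (ι → A) := 1 + q • of z
  have hM : φ.mapMatrix M = g := by
    ext i j
    have hone : φ ((1 : Matrix n n (ι → A)) i j) = (1 : Matrix n n (l.Germ A)) i j := by
      simp [one_apply, apply_ite φ]
    calc φ (M i j)
      _ = φ ((1 : Matrix n n (ι → A)) i j) + φ q * φ (z i j) := by simp [M]
      _ = (1 : Matrix n n (l.Germ A)) i j + φ q * w i j := by rw [hone, ← hz]; rfl
      _ = g i j := by rw [← hw, add_sub_cancel]
  obtain ⟨X, hX, hXM⟩ := exists_mem_congruenceSubgroup_pi_eq (q := q) (M := M) (by simp [M])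
  refine ⟨X, hX, ?_⟩
  have hdet : φ M.det = φ 1 := by rw [φ.map_det, hM, g.det_coe, map_one]
  refine Subtype.ext (Eq.trans ?_ hM)
  ext i j
  exact Filter.Germ.coe_eq.2 ((Filter.Germ.coe_eq.1 hdet).mono fun k hk ↦ hXM k hk i j)

end Commutator

end Mennicke

theorem stmt7_general {ι : Type*} (l : Filter ι) {I : Ideal (l.Germ Zhalf)} (hI : I.FG) :
    SL3Congruence (l.Germ Zhalf) (I ^ 2) ≤
      ⁅SL3Congruence (l.Germ Zhalf) I, SL3Congruence (l.Germ Zhalf) I⁆ := by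
  let φ : (ι → Zhalf) →+* l.Germ Zhalf := Filter.Germ.coeRingHom l
  have hφ : Function.Surjective φ := Quot.mk_surjective
  have := hφ.isBezout
  obtain ⟨⟨d, rfl⟩⟩ := IsBezout.isPrincipal_of_FG I hI
  obtain ⟨q, rfl⟩ := hφ d
  have hmap : (Mennicke.congruenceSubgroup (Fin 3) (Ideal.span {q})).map
      (Matrix.SpecialLinearGroup.map φ) ≤ SL3Congruence _ (Ideal.span {φ q}) := by
    rintro _ ⟨X, hX, rfl⟩
    exact Mennicke.map_mem_congruenceSubgroup φ hX
  intro g hg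
  rw [Ideal.submodule_span_eq, Ideal.span_singleton_pow, ← map_pow] at hg
  obtain ⟨X, hX, rfl⟩ := Mennicke.exists_map_coeRingHom_eq hg
  have := Subgroup.mem_map_of_mem (Matrix.SpecialLinearGroup.map φ)
    (Mennicke.congruenceSubgroup_sq_le_commutator_pi q hX)
  rw [Subgroup.map_commutator] at this
  exact Subgroup.commutator_mono hmap hmap this

theorem stmt7 (𝒩 : Ultrafilter ℕ) (h𝒩 : ∀ n : ℕ, (𝒩 : Filter ℕ) ≠ pure n)
    (a b : (𝒩 : Filter ℕ).Germ ↥Zhalf) (ha : a ≠ 0) (hb : b ≠ 0) :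
    SL3Congruence ((𝒩 : Filter ℕ).Germ ↥Zhalf) ((Ideal.span {a, b}) ^ 2) ≤
      ⁅SL3Congruence ((𝒩 : Filter ℕ).Germ ↥Zhalf) (Ideal.span {a, b}),
        SL3Congruence ((𝒩 : Filter ℕ).Germ ↥Zhalf) (Ideal.span {a, b})⁆ :=
  stmt7_general (𝒩 : Filter ℕ) (Submodule.fg_span (Set.toFinite {a, b}))
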